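/- Let T̂_0 := 5·exp(2C_0³)/(η(α−ε)³(1−p_un)σ_0). On the event E, under Condition (H), for every iteration t ≤ T̂_0 the noise coefficients satisfy max_{i,j,r} ρ_{i,j,r}^{(t)} ≤ 100·exp(2C_0³)·log(16NmP/δ)·σ_0σ_n²d/(N(α−ε)³(1−p_un)). In particular, since T_0 ≤ T̂_0 where T_0 is the signal-learning hitting time, the same bound holds for all t ≤ T_0. -/

import Mathlib

open Finset MeasureTheory ProbabilityTheory
open scoped ENNReal NNReal

noncomputable section

namespace AD

/-- Cubic ReLU activation. -/
def phi (z : ℝ) : ℝ := (max 0 z) ^ 3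

/-- Negative sigmoid `ψ(z) = 1/(1+e^z)`. -/
def psi (z : ℝ) : ℝ := 1 / (1 + Real.exp z)

/-- Logistic loss `ℓ(z) = log(1+e^{-z})`. -/
def lloss (z : ℝ) : ℝ := Real.log (1 + Real.exp (-z))

/-- Logistic sigmoid `σ(z) = 1/(1+e^{-z})`. -/
def sigm (z : ℝ) : ℝ := 1 / (1 + Real.exp (-z))

/-- Euclidean inner product on `Fin d → ℝ`. -/
def dot {d : ℕ} (a b : Fin d → ℝ) : ℝ := ∑ k, a k * b k

/-- Squared Euclidean norm. -/
def sqnorm {d : ℕ} (a : Fin d → ℝ) : ℝ := dot a a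

/-- First standard basis vector `e₁` (the learnable feature `u`). -/
def e1 (d : ℕ) (hd : 0 < d) : Fin d → ℝ := fun k => if k = (⟨0, hd⟩ : Fin d) then 1 else 0

/-- Last standard basis vector `e_d` (the unlearnable feature `v`). -/
def eLast (d : ℕ) (_hd : 0 < d) : Fin d → ℝ := fun k => if (k : ℕ) = d - 1 then 1 else 0

/-- The two-layer student network
`f_W(X) = ∑_r ∑_p [φ(⟨w_r,x_p⟩) − φ(−⟨w_r,x_p⟩)]`. -/
def netOut {m P d : ℕ} (w : Fin m → Fin d → ℝ) (X : Fin P → Fin d → ℝ) : ℝ :=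
  ∑ r, ∑ p, (phi (dot (w r) (X p)) - phi (-(dot (w r) (X p))))

/-- The concentration event `E` of the paper, i.e. properties (P1)–(P8), stated for
training patches `x`, initialization `w0`, labels `y` and signal-patch indices `sig`. -/
def EventEOn (N m P d : ℕ) (hd : 0 < d) (sigman sigma0 delta : ℝ)
    (y : Fin N → ℝ) (sig : Fin N → Fin P)
    (x : Fin N → Fin P → Fin d → ℝ) (w0 : Fin m → Fin d → ℝ) : Prop :=
  -- (P1) noise-patch norms
  (∀ i j, j ≠ sig i →
      sigman ^ 2 * d / 2 ≤ sqnorm (x i j) ∧ sqnorm (x i j) ≤ 3 * sigman ^ 2 * d / 2) ∧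
  -- (P2) pairwise noise inner products
  (∀ i k j q, j ≠ sig i → q ≠ sig k → ((i, j) : Fin N × Fin P) ≠ (k, q) →
      |dot (x i j) (x k q)| ≤
        2 * sigman ^ 2 * Real.sqrt ((d : ℝ) * Real.log ((16 : ℝ) * N ^ 2 * P ^ 2 / delta))) ∧
  -- (P3) sup-norm of noise patches
  (∀ i j, j ≠ sig i → ∀ kk : Fin d,
      |x i j kk| ≤ sigman * Real.sqrt (2 * Real.log ((16 : ℝ) * d * N * P / delta))) ∧
  -- (P4) initialization norms
  (∀ r, Real.sqrt (sqnorm (w0 r)) ≤ 2 * sigma0 * Real.sqrt d) ∧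
  -- (P5) initialization signal correlation
  (∀ r, |dot (w0 r) (e1 d hd)| ≤ sigma0 * Real.sqrt (2 * Real.log ((16 : ℝ) * m / delta))) ∧
  -- (P6) initialization noise correlations
  (∀ r i j, j ≠ sig i →
      |dot (w0 r) (x i j)| ≤
        2 * sigma0 * sigman * Real.sqrt ((d : ℝ) * Real.log ((16 : ℝ) * N * m * P / delta))) ∧
  -- (P7) maximal initial signal alignment
  (∃ r, sigma0 / 2 ≤ dot (w0 r) (e1 d hd)) ∧
  -- (P8) maximal initial noise alignment
  (∀ i j, j ≠ sig i → ∃ r, sigma0 * sigman * Real.sqrt d / 4 ≤ y i * dot (w0 r) (x i j))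
structure Setting where
  N : ℕ
  m : ℕ
  P : ℕ
  d : ℕ
  T : ℕ
  hN : 0 < N
  hm : 0 < m
  hP : 0 < P
  hd : 0 < d
  alpha : ℝ
  sigman : ℝ
  sigma0 : ℝ
  eta : ℝ
  eps : ℝ
  delta : ℝ
  halpha : 0 < alpha
  hsigman : 0 < sigman
  hsigma0 : 0 < sigma0
  heta : 0 < eta
  heps : 0 < eps
  hepsalpha : eps < alpha
  hdelta0 : 0 < delta
  hdelta1 : delta < 1
  /-- labels -/
  y : Fin N → ℝ
  hy : ∀ i, y i = 1 ∨ y i = -1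
  /-- signal patch index -/
  sig : Fin N → Fin P
  /-- learnable samples -/
  SL : Finset (Fin N)
  /-- unlearnable samples -/
  SU : Finset (Fin N)
  hunion : SL ∪ SU = Finset.univ
  hdisj : Disjoint SL SU
  /-- training patches -/
  x : Fin N → Fin P → Fin d → ℝ
  hsigL : ∀ i ∈ SL, x i (sig i) = (alpha * y i) • e1 d hd
  hsigU : ∀ i ∈ SU, x i (sig i) = (alpha * y i) • eLast d hd
  hnoiseU : ∀ i j, j ≠ sig i → dot (x i j) (e1 d hd) = 0
  hnoiseV : ∀ i j, j ≠ sig i → dot (x i j) (eLast d hd) = 0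
  /-- weight trajectory -/
  w : ℕ → Fin m → Fin d → ℝ
  hwperp : ∀ t r, dot (w t r) (eLast d hd) = 0
  /-- adversarial training examples at each iteration -/
  xadv : ℕ → Fin N → Fin P → Fin d → ℝ
  hadvnoise : ∀ t i j, j ≠ sig i → xadv t i j = x i j
  hadvspan : ∀ t i, ∃ c : ℝ, xadv t i (sig i) - x i (sig i) = c • x i (sig i)
  hadvlinf : ∀ t i p k, |xadv t i p k - x i p k| ≤ eps
  hadvlearn : ∀ t : ℕ, ∀ i ∈ SL,
    alpha - eps ≤ y i * dot (xadv t i (sig i)) (e1 d hd) ∧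
      y i * dot (xadv t i (sig i)) (e1 d hd) ≤ alpha

namespace Setting

variable (S : Setting)

/-- Adversarial margin `y_i f_{W^{(t)}}(X̃_i^{(t)})`. -/
def marg (t : ℕ) (i : Fin S.N) : ℝ := S.y i * netOut (S.w t) (S.xadv t i)

/-- Signal coordinate `w_{r,1}^{(t)}`. -/
def wsig (t : ℕ) (r : Fin S.m) : ℝ := S.w t r ⟨0, S.hd⟩

/-- Unlearnable fraction `p_un = |S_U|/N`. -/
def pun : ℝ := (S.SU.card : ℝ) / S.N

/-- The adversarial-training gradient-descent dynamics. -/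
def ATDyn : Prop :=
  ∀ t r, S.w (t + 1) r = S.w t r +
    (3 * S.eta / S.N) •
      ∑ i : Fin S.N, (psi (S.marg t i) * S.y i) •
        ∑ p : Fin S.P, (dot (S.w t r) (S.xadv t i p)) ^ 2 • S.xadv t i p

/-- The signed gradient weight of sample `i` at iteration `t` under adversarial
distillation from teacher logits `fT`. -/
def gAD (fT : Fin S.N → ℝ) (t : ℕ) (i : Fin S.N) : ℝ :=
  sigm (S.y i * fT i) * psi (S.marg t i) - sigm (-(S.y i * fT i)) * psi (-(S.marg t i))

/-- The adversarial-distillation gradient-descent dynamics. -/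
def ADDyn (fT : Fin S.N → ℝ) : Prop :=
  ∀ t r, S.w (t + 1) r = S.w t r +
    (3 * S.eta / S.N) •
      ∑ i : Fin S.N, (S.gAD fT t i * S.y i) •
        ∑ p : Fin S.P, (dot (S.w t r) (S.xadv t i p)) ^ 2 • S.xadv t i p

/-- Noise coefficients `ρ_{i,j,r}^{(t)}` (adversarial training). -/
def rho (i : Fin S.N) (j : Fin S.P) (r : Fin S.m) : ℕ → ℝ
  | 0 => 0
  | t + 1 => rho i j r t + (3 * S.eta / S.N) * psi (S.marg t i) * (dot (S.w t r) (S.x i j)) ^ 2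

/-- Noise coefficients under adversarial distillation. -/
def rhoAD (fT : Fin S.N → ℝ) (i : Fin S.N) (j : Fin S.P) (r : Fin S.m) : ℕ → ℝ
  | 0 => 0
  | t + 1 => rhoAD fT i j r t + (3 * S.eta / S.N) * S.gAD fT t i * (dot (S.w t r) (S.x i j)) ^ 2

/-- The event `E` for a setting. -/
def EventE : Prop :=
  EventEOn S.N S.m S.P S.d S.hd S.sigman S.sigma0 S.delta S.y S.sig S.x (S.w 0)

/-- Condition (H): the parameter requirements of Condition 4.1 of the paper
(without the unlearnable-fraction regime item, which is imposed separately). -/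
def CondH (C : ℝ) : Prop :=
  1 ≤ C ∧
  -- training horizon
  C * S.N / (S.eta * S.sigma0 * S.sigman ^ 3 * ((S.d : ℝ) * Real.sqrt S.d)) ≤ (S.T : ℝ) ∧
  -- dimension
  C * S.m ^ 2 * S.P ^ 2 * S.N ^ 2 *
      (Real.log ((S.T : ℝ) * S.N * S.m * S.P / S.delta)) ^ 4 ≤ (S.d : ℝ) ∧
  -- signal strength
  C * S.sigman * Real.sqrt S.d * Real.log ((S.T : ℝ) * S.N * S.m * S.P / S.delta) /
      (((S.N : ℝ) * (1 - S.pun)) ^ ((1 : ℝ) / 3)) ≤ S.alpha ∧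
  -- initialization scale
  S.sigma0 ≤
    C⁻¹ *
        min (min (1 / ((S.m : ℝ) ^ ((2 : ℝ) / 3) * (S.P : ℝ) ^ ((2 : ℝ) / 3) *
            S.sigman * Real.sqrt S.d))
          (1 / (S.alpha * (S.m : ℝ) ^ ((2 : ℝ) / 3))))
          (1 / (S.sigman * S.m ^ 2 * Real.sqrt S.P * S.d)) /
      Real.log ((S.T : ℝ) * S.d * S.N * S.m * S.P / S.delta) ∧
  -- learning rate
  S.eta ≤
    C⁻¹ * min (min (1 / (S.alpha ^ 3 * S.sigma0)) (1 / (S.sigman ^ 2 * S.d))) (1 / S.alpha ^ 2) /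
      Real.log ((S.T : ℝ) * S.N * S.m * S.P / S.delta) ∧
  -- adversarial budget
  C * S.sigman * S.m * Real.sqrt S.P * Real.log ((S.T : ℝ) * S.d * S.N * S.P / S.delta) ≤ S.eps ∧
  S.eps < C⁻¹ * min S.alpha (1 / (S.m * S.sigma0 * S.d)) ∧
  -- width and number of patches
  C * Real.log ((S.N : ℝ) * S.P / S.delta) ≤ (S.m : ℝ) ∧
  (S.m : ℝ) ≤ C * Real.log S.d ^ C ∧
  2 ≤ S.P ∧ (S.P : ℝ) ≤ C

/-- The sparse-unlearnable regime of Condition 4.1. -/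
def SparseRegime (C : ℝ) : Prop :=
  C / S.N ≤ S.pun ∧ S.pun ≤ C⁻¹ * Real.log S.d / S.N ∧
  C * S.m * S.P * Real.log ((S.T : ℝ) * S.d * S.N * S.m * S.P / S.delta) ≤ (S.N : ℝ)

/-- The noise-stability bound (NS) on learnable samples at iteration `t`. -/
def NS (t : ℕ) : Prop :=
  ∀ r : Fin S.m, ∀ i ∈ S.SL, ∀ j, j ≠ S.sig i →
    |dot (S.w t r) (S.x i j)| ≤
      3 * S.sigma0 * S.sigman *
          Real.sqrt ((S.d : ℝ) * Real.log ((16 : ℝ) * S.N * S.m * S.P / S.delta)) +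
        21 * S.pun * S.N * S.P * Real.log S.T ^ ((1 : ℝ) / 3) / Real.sqrt S.d *
          Real.sqrt (Real.log ((16 : ℝ) * S.N ^ 2 * S.P ^ 2 / S.delta))

/-- The signal-learning hitting time `T₀`. -/
def T0 (C0 : ℝ) : ℕ :=
  sInf {t : ℕ | ∃ r, C0 / (S.alpha * (S.m : ℝ) ^ ((1 : ℝ) / 3)) < S.wsig t r}

/-- Maximum of the noise coefficients over unlearnable noise patches. -/
def rhoMaxSU (t : ℕ) : ℝ :=
  sSup {z : ℝ | ∃ r : Fin S.m, ∃ k ∈ S.SU, ∃ q, q ≠ S.sig k ∧ z = S.rho k q r t}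

/-- Shifted noise coefficients `ρ̂_{i,j,r}^{(t)}`. -/
def rhoHat (i : Fin S.N) (j : Fin S.P) (r : Fin S.m) (t : ℕ) : ℝ :=
  S.rho i j r t + S.y i * dot (S.w 0 r) (S.x i j) / sqnorm (S.x i j)

/-- Maximum shifted noise coefficient over unlearnable noise patches. -/
def rhoHatMax (t : ℕ) : ℝ :=
  sSup {z : ℝ | ∃ r : Fin S.m, ∃ k ∈ S.SU, ∃ q, q ≠ S.sig k ∧ z = S.rhoHat k q r t}

/-- The noise-memorization hitting time `T₁`. -/
def T1 (C1 : ℝ) : ℕ :=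
  sInf {t : ℕ | C1 / (((S.m : ℝ) * S.P) ^ ((1 : ℝ) / 3) * S.sigman ^ 2 * S.d) < S.rhoHatMax t}

/-- The Good-Teacher horizon `T_max`. -/
def Tmax : ℝ :=
  S.N / (1000 * S.eta * S.m * S.P * S.sigma0 ^ 4 * S.sigman ^ 6 * (S.d : ℝ) ^ 3 *
    Real.log ((16 : ℝ) * S.N * S.m * S.P / S.delta) ^ 2)

end Setting

theorem psi_pos (z : ℝ) : 0 < psi z := by
  unfold psi
  positivity

theorem psi_le_one (z : ℝ) : psi z ≤ 1 :=
  div_le_one_of_le₀ (by linarith [Real.exp_pos z]) (by positivity)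

theorem inv_two_mul_exp_le_psi {z M : ℝ} (hM : 0 ≤ M) (hz : z ≤ M) :
    1 / (2 * Real.exp M) ≤ psi z := by
  refine one_div_le_one_div_of_le (by positivity) ?_
  linarith [Real.exp_le_exp.mpr hz, Real.one_le_exp hM]

theorem phi_sub_phi_neg (z : ℝ) : phi z - phi (-z) = z ^ 3 := by
  unfold phi
  rcases le_total 0 z with h | h
  · rw [max_eq_right h, max_eq_left (by linarith)]; ring
  · rw [max_eq_left h, max_eq_right (by linarith)]; ring

theorem netOut_eq_sum_pow_three {m P d : ℕ} (w : Fin m → Fin d → ℝ) (X : Fin P → Fin d → ℝ) :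
    netOut w X = ∑ r, ∑ p, dot (w r) (X p) ^ 3 := by
  simp only [netOut, phi_sub_phi_neg]

section dot

variable {d : ℕ}

theorem dot_comm (a b : Fin d → ℝ) : dot a b = dot b a :=
  dotProduct_comm a b

theorem dot_add_left (a b c : Fin d → ℝ) : dot (a + b) c = dot a c + dot b c :=
  add_dotProduct a b c

theorem dot_smul_left (s : ℝ) (a b : Fin d → ℝ) : dot (s • a) b = s * dot a b :=
  smul_dotProduct s a b

theorem dot_smul_right (s : ℝ) (a b : Fin d → ℝ) : dot a (s • b) = s * dot a b :=
  dotProduct_smul s a b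

theorem dot_sum_left {ι : Type*} (s : Finset ι) (a : ι → Fin d → ℝ) (b : Fin d → ℝ) :
    dot (∑ i ∈ s, a i) b = ∑ i ∈ s, dot (a i) b :=
  sum_dotProduct s a b

theorem sqnorm_nonneg (a : Fin d → ℝ) : 0 ≤ sqnorm a :=
  dotProduct_self_star_nonneg a

theorem dot_e1 (hd : 0 < d) (a : Fin d → ℝ) : dot a (e1 d hd) = a ⟨0, hd⟩ := by
  simp [dot, e1]

end dot

theorem rpow_div_natCast_pow {x : ℝ} (hx : 0 ≤ x) (a : ℝ) {n : ℕ} (hn : n ≠ 0) :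
    (x ^ (a / n)) ^ n = x ^ a := by
  rw [← Real.rpow_mul_natCast hx, div_mul_cancel₀ a (Nat.cast_ne_zero.mpr hn)]

theorem mul_sqrt_mul_le {a b l : ℝ} (ha : 0 ≤ a) (hb : 0 ≤ b) (h : a ^ 2 * l ≤ b) :
    a * √(b * l) ≤ b :=
  calc a * √(b * l) = √(a ^ 2 * (b * l)) := by rw [Real.sqrt_mul (sq_nonneg a), Real.sqrt_sq ha]
    _ = √(b * (a ^ 2 * l)) := by rw [mul_left_comm]
    _ ≤ √(b * b) := by gcongr
    _ = b := Real.sqrt_mul_self hb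

section quadraticGrowth

variable {𝕜 : Type*} [Field 𝕜] [LinearOrder 𝕜] [IsStrictOrderedRing 𝕜]

theorem inv_add_mul_sq_le {x κ : 𝕜} (hx : 0 < x) (hκ : 0 ≤ κ) (hκx : κ * x ≤ 1) :
    (x + κ * x ^ 2)⁻¹ ≤ x⁻¹ - κ / 2 := by
  have hgap : x⁻¹ - κ / 2 - (x + κ * x ^ 2)⁻¹ = κ * (1 - κ * x) / (2 * (1 + κ * x)) := by
    rw [show x + κ * x ^ 2 = x * (1 + κ * x) by ring]
    field_simp
    ring
  have : 0 ≤ κ * (1 - κ * x) / (2 * (1 + κ * x)) :=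
    div_nonneg (mul_nonneg hκ (sub_nonneg.mpr hκx)) (by positivity)
  linarith

/- The discrete Riccati inequality `κ * w ^ 2 ≤ Δw` makes `1 / w` decrease by at least `κ / 2` in
each step, and `1 / w` stays positive. -/
theorem natCast_mul_lt_inv_of_quadratic_growth {w : ℕ → 𝕜} {κ : 𝕜} {n : ℕ} (hκ : 0 ≤ κ)
    (h0 : 0 < w 0) (hw : ∀ t < n, κ * w t ≤ 1)
    (hstep : ∀ t < n, w t + κ * w t ^ 2 ≤ w (t + 1)) : n * (κ / 2) < (w 0)⁻¹ := by
  suffices h : ∀ t ≤ n, 0 < w t ∧ (w t)⁻¹ + t * (κ / 2) ≤ (w 0)⁻¹ by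
    obtain ⟨hpos, hle⟩ := h n le_rfl
    linarith [inv_pos.mpr hpos]
  intro t
  induction t with
  | zero => simpa using h0
  | succ t ih =>
    intro ht
    obtain ⟨hpos, hle⟩ := ih (by lia)
    have hpos' : 0 < w t + κ * w t ^ 2 := by positivity
    have hinv : (w (t + 1))⁻¹ ≤ (w t)⁻¹ - κ / 2 :=
      (inv_anti₀ hpos' (hstep t ht)).trans (inv_add_mul_sq_le hpos hκ (hw t ht))
    refine ⟨hpos'.trans_le (hstep t ht), ?_⟩
    push_cast
    linarith

end quadraticGrowth

namespace Setting

variable (S : Setting)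

section bounds

theorem one_le_N : (1 : ℝ) ≤ S.N := Nat.one_le_cast.mpr S.hN

theorem one_le_m : (1 : ℝ) ≤ S.m := Nat.one_le_cast.mpr S.hm

theorem one_le_P : (1 : ℝ) ≤ S.P := Nat.one_le_cast.mpr S.hP

theorem one_le_d : (1 : ℝ) ≤ S.d := Nat.one_le_cast.mpr S.hd

theorem N_pos : (0 : ℝ) < S.N := Nat.cast_pos.mpr S.hN

theorem alpha_sub_eps_pos : 0 < S.alpha - S.eps := sub_pos.mpr S.hepsalpha

end bounds

section samples

theorem y_sq (i : Fin S.N) : S.y i ^ 2 = 1 :=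
  sq_eq_one_iff.mpr (S.hy i)

theorem abs_y (i : Fin S.N) : |S.y i| = 1 :=
  (abs_eq zero_le_one).mpr (S.hy i)

theorem mem_SL_or_mem_SU (i : Fin S.N) : i ∈ S.SL ∨ i ∈ S.SU :=
  Finset.mem_union.mp (S.hunion ▸ Finset.mem_univ i)

theorem pun_nonneg : 0 ≤ S.pun := by
  unfold pun
  positivity

theorem card_SL_div_N : (S.SL.card : ℝ) / S.N = 1 - S.pun := by
  have hcard : (S.N : ℝ) = S.SL.card + S.SU.card := by
    exact_mod_cast (by simpa [S.hunion] using Finset.card_union_of_disjoint S.hdisj)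
  have := S.N_pos
  unfold pun
  field_simp
  linarith

theorem wsig_eq_dot (t : ℕ) (r : Fin S.m) : S.wsig t r = dot (S.w t r) (e1 S.d S.hd) :=
  (dot_e1 S.hd _).symm

/-- The signed strength `y_i ⟨x̃_{i,s(X_i)}^{(t)}, u⟩` of the learnable feature that is left in
the `i`-th adversarial example; it lies in `[α - ε, α]` for learnable samples. -/
def advSignal (t : ℕ) (i : Fin S.N) : ℝ := S.y i * dot (S.xadv t i (S.sig i)) (e1 S.d S.hd)

theorem exists_xadv_sig_eq_smul (t : ℕ) (i : Fin S.N) :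
    ∃ c : ℝ, S.xadv t i (S.sig i) = c • S.x i (S.sig i) := by
  obtain ⟨c, hc⟩ := S.hadvspan t i
  exact ⟨c + 1, by rw [add_smul, one_smul, ← hc, sub_add_cancel]⟩

theorem dot_xadv_sig_e1 (t : ℕ) (i : Fin S.N) :
    dot (S.xadv t i (S.sig i)) (e1 S.d S.hd) = S.y i * S.advSignal t i := by
  rw [advSignal, ← mul_assoc, ← sq, S.y_sq, one_mul]

theorem xadv_sig_of_mem_SL (t : ℕ) {i : Fin S.N} (hi : i ∈ S.SL) :
    S.xadv t i (S.sig i) = (S.y i * S.advSignal t i) • e1 S.d S.hd := by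
  obtain ⟨c, hc⟩ := S.exists_xadv_sig_eq_smul t i
  rw [S.hsigL i hi, smul_smul] at hc
  rw [← S.dot_xadv_sig_e1, hc, dot_smul_left, dot_e1]
  simp [e1]

theorem dot_w_xadv_sig_of_mem_SL (t : ℕ) {i : Fin S.N} (hi : i ∈ S.SL) (r : Fin S.m) :
    dot (S.w t r) (S.xadv t i (S.sig i)) = S.y i * S.advSignal t i * S.wsig t r := by
  rw [S.xadv_sig_of_mem_SL t hi, dot_smul_right, wsig_eq_dot]

theorem dot_w_xadv_sig_of_mem_SU (t : ℕ) {i : Fin S.N} (hi : i ∈ S.SU) (r : Fin S.m) :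
    dot (S.w t r) (S.xadv t i (S.sig i)) = 0 := by
  obtain ⟨c, hc⟩ := S.exists_xadv_sig_eq_smul t i
  rw [hc, S.hsigU i hi, dot_smul_right, dot_smul_right, S.hwperp, mul_zero, mul_zero]

theorem dot_xadv_sig_noise (t : ℕ) (k i : Fin S.N) {j : Fin S.P} (hj : j ≠ S.sig i) :
    dot (S.xadv t k (S.sig k)) (S.x i j) = 0 := by
  obtain ⟨c, hc⟩ := S.exists_xadv_sig_eq_smul t k
  rw [hc, dot_smul_left, dot_comm]
  rcases S.mem_SL_or_mem_SU k with hk | hk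
  · rw [S.hsigL k hk, dot_smul_right, S.hnoiseU i j hj, mul_zero, mul_zero]
  · rw [S.hsigU k hk, dot_smul_right, S.hnoiseV i j hj, mul_zero, mul_zero]

end samples

section dynamics

variable {S}

theorem dot_w_succ (hD : S.ATDyn) (t : ℕ) (r : Fin S.m) (v : Fin S.d → ℝ) :
    dot (S.w (t + 1) r) v = dot (S.w t r) v + 3 * S.eta / S.N *
      ∑ i, psi (S.marg t i) * S.y i *
        ∑ p, dot (S.w t r) (S.xadv t i p) ^ 2 * dot (S.xadv t i p) v := by
  simp only [hD t r, dot_add_left, dot_smul_left, dot_sum_left]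

theorem sum_dot_xadv_e1 (t : ℕ) (i : Fin S.N) (r : Fin S.m) :
    ∑ p, dot (S.w t r) (S.xadv t i p) ^ 2 * dot (S.xadv t i p) (e1 S.d S.hd) =
      dot (S.w t r) (S.xadv t i (S.sig i)) ^ 2 * (S.y i * S.advSignal t i) := by
  rw [← S.dot_xadv_sig_e1]
  refine Fintype.sum_eq_single _ fun p hp => ?_
  rw [S.hadvnoise t i p hp, S.hnoiseU i p hp, mul_zero]

theorem wsig_succ (hD : S.ATDyn) (t : ℕ) (r : Fin S.m) :
    S.wsig (t + 1) r = S.wsig t r + 3 * S.eta / S.N *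
      ∑ i ∈ S.SL, psi (S.marg t i) * S.advSignal t i ^ 3 * S.wsig t r ^ 2 := by
  rw [S.wsig_eq_dot (t + 1), dot_w_succ hD, ← S.wsig_eq_dot t]
  simp only [sum_dot_xadv_e1]
  congr 2
  symm
  refine Finset.sum_subset_zero_on_sdiff (Finset.subset_univ _) (fun i hi => ?_) fun i hi => ?_
  · have hiU : i ∈ S.SU := (S.mem_SL_or_mem_SU i).resolve_left (Finset.mem_sdiff.mp hi).2
    rw [S.dot_w_xadv_sig_of_mem_SU t hiU]
    ring
  · have hy4 : S.y i ^ 4 = 1 := by rw [pow_mul (S.y i) 2 2, S.y_sq, one_pow]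
    rw [S.dot_w_xadv_sig_of_mem_SL t hi]
    linear_combination (-(psi (S.marg t i) * S.advSignal t i ^ 3 * S.wsig t r ^ 2)) * hy4

theorem rho_nonneg (i : Fin S.N) (j : Fin S.P) (r : Fin S.m) (t : ℕ) : 0 ≤ S.rho i j r t := by
  induction t with
  | zero => exact le_rfl
  | succ t ih =>
    have := psi_pos (S.marg t i)
    have := S.heta
    rw [rho]
    positivity

theorem dot_w_noise (hD : S.ATDyn) (i : Fin S.N) {j : Fin S.P} (hj : j ≠ S.sig i) (r : Fin S.m)
    (t : ℕ) :
    dot (S.w t r) (S.x i j) = dot (S.w 0 r) (S.x i j) +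
      ∑ k, ∑ q ∈ Finset.univ.erase (S.sig k),
        S.y k * S.rho k q r t * dot (S.x k q) (S.x i j) := by
  induction t with
  | zero => simp [rho]
  | succ t ih =>
    rw [dot_w_succ hD, ih, add_assoc, Finset.mul_sum, ← Finset.sum_add_distrib]
    refine congrArg _ (Finset.sum_congr rfl fun k _ => ?_)
    rw [← Finset.sum_erase Finset.univ (a := S.sig k)
        (by rw [S.dot_xadv_sig_noise t k i hj, mul_zero]),
      Finset.mul_sum, Finset.mul_sum, ← Finset.sum_add_distrib]
    refine Finset.sum_congr rfl fun q hq => ?_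
    rw [S.hadvnoise t k q (Finset.ne_of_mem_erase hq), rho]
    ring

theorem marg_eq_sum_pow_three (t : ℕ) (i : Fin S.N) :
    S.marg t i = ∑ r, ∑ p, (S.y i * dot (S.w t r) (S.xadv t i p)) ^ 3 := by
  have hy (z : ℝ) : S.y i * z ^ 3 = (S.y i * z) ^ 3 := by
    linear_combination (-(S.y i * z ^ 3)) * S.y_sq i
  simp only [marg, netOut_eq_sum_pow_three, Finset.mul_sum, hy]

theorem advSignal_mul_wsig_le {t : ℕ} {i : Fin S.N} (hi : i ∈ S.SL) {r : Fin S.m} {a : ℝ}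
    (ha : 0 ≤ a) (hw : S.alpha * S.wsig t r ≤ a) : S.advSignal t i * S.wsig t r ≤ a := by
  obtain ⟨hlow, hup⟩ : S.alpha - S.eps ≤ S.advSignal t i ∧ S.advSignal t i ≤ S.alpha :=
    S.hadvlearn t i hi
  rcases le_total 0 (S.wsig t r) with h | h
  · exact (mul_le_mul_of_nonneg_right hup h).trans hw
  · exact (mul_nonpos_of_nonneg_of_nonpos (S.alpha_sub_eps_pos.le.trans hlow) h).trans ha

theorem marg_le {t : ℕ} {i : Fin S.N} (hi : i ∈ S.SL) {a B : ℝ} (ha : 0 ≤ a) (hB : 0 ≤ B)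
    (hsignal : ∀ r, S.alpha * S.wsig t r ≤ a)
    (hnoise : ∀ r j, j ≠ S.sig i → |dot (S.w t r) (S.x i j)| ≤ B) :
    S.marg t i ≤ S.m * a ^ 3 + S.m * S.P * B ^ 3 := by
  have hpatch (r : Fin S.m) (p : Fin S.P) : (S.y i * dot (S.w t r) (S.xadv t i p)) ^ 3 ≤
      (if p = S.sig i then a ^ 3 else 0) + B ^ 3 := by
    split_ifs with hp
    · have : S.y i * dot (S.w t r) (S.xadv t i p) = S.advSignal t i * S.wsig t r := by
        rw [hp, S.dot_w_xadv_sig_of_mem_SL t hi]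
        linear_combination (S.advSignal t i * S.wsig t r) * S.y_sq i
      rw [this]
      exact le_add_of_le_of_nonneg
        ((Odd.pow_le_pow (by decide)).mpr (advSignal_mul_wsig_le hi ha (hsignal r)))
        (by positivity)
    · rw [S.hadvnoise t i p hp, zero_add]
      refine (Odd.pow_le_pow (by decide)).mpr ((le_abs_self _).trans ?_)
      rw [abs_mul, S.abs_y, one_mul]
      exact hnoise r p hp
  calc S.marg t i = ∑ r, ∑ p, (S.y i * dot (S.w t r) (S.xadv t i p)) ^ 3 :=
        marg_eq_sum_pow_three t i
    _ ≤ ∑ _r : Fin S.m, ∑ p, ((if p = S.sig i then a ^ 3 else 0) + B ^ 3) :=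
        Finset.sum_le_sum fun r _ => Finset.sum_le_sum fun p _ => hpatch r p
    _ = S.m * a ^ 3 + S.m * S.P * B ^ 3 := by
        simp [Finset.sum_add_distrib]
        ring

end dynamics

section crossTerms

variable {S}

/-- The logarithmic factor `log (16 N² P² / δ)` in the bound (P2) on inner products of distinct
noise patches. -/
def logCross : ℝ := Real.log ((16 : ℝ) * S.N ^ 2 * S.P ^ 2 / S.delta)

theorem sum_abs_dot_noise_le (hE : S.EventE) {i : Fin S.N} {j : Fin S.P} (hj : j ≠ S.sig i) :
    ∑ k, ∑ q ∈ Finset.univ.erase (S.sig k), |dot (S.x k q) (S.x i j)| ≤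
      3 * S.sigman ^ 2 * S.d / 2 + S.N * S.P * (2 * S.sigman ^ 2 * √(S.d * S.logCross)) := by
  obtain ⟨hnorm, hcross, -⟩ := hE
  set D := 3 * S.sigman ^ 2 * S.d / 2
  set F := 2 * S.sigman ^ 2 * √(S.d * S.logCross)
  have hF : 0 ≤ F := by positivity
  have hterm (k : Fin S.N) (q : Fin S.P) (hq : q ≠ S.sig k) :
      |dot (S.x k q) (S.x i j)| ≤ (if (k, q) = (i, j) then D else 0) + F := by
    split_ifs with heq
    · obtain ⟨rfl, rfl⟩ := Prod.mk.inj heq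
      exact (abs_of_nonneg (sqnorm_nonneg _)).trans_le (le_add_of_le_of_nonneg (hnorm k q hq).2 hF)
    · rw [zero_add]
      exact hcross k i q j hq hj heq
  calc ∑ k, ∑ q ∈ Finset.univ.erase (S.sig k), |dot (S.x k q) (S.x i j)|
      ≤ ∑ k, ∑ q, ((if (k, q) = (i, j) then D else 0) + F) :=
        Finset.sum_le_sum fun k _ =>
          (Finset.sum_le_sum fun q hq => hterm k q (Finset.ne_of_mem_erase hq)).trans <|
            Finset.sum_le_sum_of_subset_of_nonneg (Finset.erase_subset _ _) fun q _ _ => by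
              positivity
    _ = ∑ z : Fin S.N × Fin S.P, ((if z = (i, j) then D else 0) + F) :=
        (Fintype.sum_prod_type' _).symm
    _ = D + S.N * S.P * F := by
        simp [Finset.sum_add_distrib]

end crossTerms

section logarithms

/-- The logarithmic factor `log (T N m P / δ)` of the parameter constraints. -/
def logT : ℝ := Real.log ((S.T : ℝ) * S.N * S.m * S.P / S.delta)

/-- The logarithmic factor `log (T d N m P / δ)` of the constraints on `σ₀` and on `N`. -/
def logTd : ℝ := Real.log ((S.T : ℝ) * S.d * S.N * S.m * S.P / S.delta)

/-- The logarithmic factor `log (16 N m P / δ)` in the bound (P6) on the noise alignments at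
initialization. -/
def logInit : ℝ := Real.log ((16 : ℝ) * S.N * S.m * S.P / S.delta)

theorem one_le_logInit : 1 ≤ S.logInit := by
  have hprod : (1 : ℝ) ≤ (S.N : ℝ) * S.m * S.P :=
    one_le_mul_of_one_le_of_one_le
      (one_le_mul_of_one_le_of_one_le S.one_le_N S.one_le_m) S.one_le_P
  have harg : (16 : ℝ) ≤ 16 * S.N * S.m * S.P / S.delta :=
    (by linarith : (16 : ℝ) ≤ 16 * S.N * S.m * S.P).trans
      (le_div_self (by positivity) S.hdelta0 S.hdelta1.le)
  rw [logInit, Real.le_log_iff_exp_le (by linarith)]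
  linarith [Real.exp_one_lt_d9]

theorem sqrt_logInit_le_logInit : √S.logInit ≤ S.logInit :=
  Real.sqrt_le_iff.mpr
    ⟨zero_le_one.trans S.one_le_logInit, le_self_pow₀ S.one_le_logInit two_ne_zero⟩

variable {S} {C : ℝ}

theorem CondH.one_le_T (h : S.CondH C) : (1 : ℝ) ≤ S.T := by
  obtain ⟨hC, hT, -⟩ := h
  have := S.N_pos
  have := S.heta
  have := S.hsigma0
  have := S.hsigman
  have := S.one_le_d
  have hpos : (0 : ℝ) < S.T := lt_of_lt_of_le (by positivity) hT
  exact_mod_cast hpos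

theorem CondH.one_le_prod (h : S.CondH C) : (1 : ℝ) ≤ S.T * S.N * S.m :=
  one_le_mul_of_one_le_of_one_le (one_le_mul_of_one_le_of_one_le h.one_le_T S.one_le_N) S.one_le_m

theorem CondH.log_two_le_logT (h : S.CondH C) : Real.log 2 ≤ S.logT := by
  have hP : (2 : ℝ) ≤ S.P := by
    obtain ⟨-, -, -, -, -, -, -, -, -, -, hP, -⟩ := h
    exact_mod_cast hP
  refine Real.log_le_log two_pos ?_
  calc (2 : ℝ) ≤ S.P := hP
    _ ≤ S.T * S.N * S.m * S.P := le_mul_of_one_le_left (by positivity) h.one_le_prod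
    _ ≤ S.T * S.N * S.m * S.P / S.delta := le_div_self (by positivity) S.hdelta0 S.hdelta1.le

theorem CondH.two_thirds_le_logT (h : S.CondH C) : 2 / 3 ≤ S.logT := by
  linarith [h.log_two_le_logT, Real.log_two_gt_d9]

theorem log_two_pow_mul_le {x L : ℝ} (hx : 0 < x) (hL : Real.log 2 ≤ L) :
    Real.log (2 ^ 4 * x) ≤ 4 * L + Real.log x := by
  rw [Real.log_mul (by positivity) hx.ne', Real.log_pow]
  push_cast
  linarith

theorem CondH.logInit_le (h : S.CondH C) : S.logInit ≤ 5 * S.logT := by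
  have := h.one_le_T
  have := S.N_pos
  have := S.one_le_m
  have := S.one_le_P
  have := S.hdelta0
  calc S.logInit ≤ Real.log (2 ^ 4 * (S.T * S.N * S.m * S.P / S.delta)) := by
        refine Real.log_le_log (by positivity) ?_
        calc (16 : ℝ) * S.N * S.m * S.P / S.delta
            ≤ S.T * (16 * S.N * S.m * S.P / S.delta) :=
              le_mul_of_one_le_left (by positivity) h.one_le_T
          _ = _ := by ring
    _ ≤ 4 * S.logT + S.logT := log_two_pow_mul_le (by positivity) h.log_two_le_logT
    _ = 5 * S.logT := by ring

theorem CondH.logCross_le (h : S.CondH C) : S.logCross ≤ 6 * S.logT := by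
  have hT := h.one_le_T
  have := S.N_pos
  have hm := S.one_le_m
  have := S.one_le_P
  have := S.hdelta0
  calc S.logCross ≤ Real.log (2 ^ 4 * (S.T * S.N * S.m * S.P / S.delta) ^ 2) := by
        refine Real.log_le_log (by positivity) ?_
        calc (16 : ℝ) * S.N ^ 2 * S.P ^ 2 / S.delta
            ≤ 16 * S.N ^ 2 * S.P ^ 2 / S.delta ^ 2 := by
              gcongr
              exact pow_le_of_le_one S.hdelta0.le S.hdelta1.le two_ne_zero
          _ ≤ (S.T * S.m) ^ 2 * (16 * S.N ^ 2 * S.P ^ 2 / S.delta ^ 2) :=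
              le_mul_of_one_le_left (by positivity)
                (one_le_pow₀ (one_le_mul_of_one_le_of_one_le hT hm))
          _ = _ := by ring
    _ ≤ 4 * S.logT + Real.log ((S.T * S.N * S.m * S.P / S.delta) ^ 2) :=
        log_two_pow_mul_le (by positivity) h.log_two_le_logT
    _ = 6 * S.logT := by
        rw [Real.log_pow, logT]
        push_cast
        ring

theorem CondH.logT_le_logTd (h : S.CondH C) : S.logT ≤ S.logTd := by
  have := h.one_le_T
  have := S.N_pos
  have := S.one_le_m
  have := S.one_le_P
  have := S.hdelta0
  refine Real.log_le_log (by positivity) ?_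
  calc (S.T : ℝ) * S.N * S.m * S.P / S.delta
      ≤ S.d * (S.T * S.N * S.m * S.P / S.delta) :=
        le_mul_of_one_le_left (by positivity) S.one_le_d
    _ = _ := by ring

theorem CondH.log_d_le_logTd (h : S.CondH C) : Real.log S.d ≤ S.logTd := by
  have hprod : (1 : ℝ) ≤ S.T * S.N * S.m * S.P :=
    one_le_mul_of_one_le_of_one_le h.one_le_prod S.one_le_P
  have := S.one_le_d
  refine Real.log_le_log (by positivity) ?_
  calc (S.d : ℝ) ≤ S.d * (S.T * S.N * S.m * S.P) := le_mul_of_one_le_right (by positivity) hprod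
    _ ≤ S.d * (S.T * S.N * S.m * S.P) / S.delta :=
        le_div_self (by positivity) S.hdelta0 S.hdelta1.le
    _ = _ := by ring

end logarithms

section parameters

variable {S} {C : ℝ}

theorem CondH.pun_lt_one (h : S.CondH C) (hC : 1 < C) (hs : S.SU.Nonempty → S.SparseRegime C) :
    S.pun < 1 := by
  rcases S.SU.eq_empty_or_nonempty with hempty | hne
  · simp [pun, hempty]
  obtain ⟨-, hpun, hN⟩ := hs hne
  have hlogd : 0 ≤ Real.log S.d := Real.log_nonneg S.one_le_d
  have hlog_le_N : Real.log S.d ≤ S.N :=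
    calc Real.log S.d ≤ S.logTd := h.log_d_le_logTd
      _ ≤ C * S.m * S.P * S.logTd :=
          le_mul_of_one_le_left (hlogd.trans h.log_d_le_logTd) <|
            one_le_mul_of_one_le_of_one_le (one_le_mul_of_one_le_of_one_le hC.le S.one_le_m)
              S.one_le_P
      _ ≤ S.N := hN
  calc S.pun ≤ C⁻¹ * Real.log S.d / S.N := hpun
    _ = C⁻¹ * (Real.log S.d / S.N) := mul_div_assoc _ _ _
    _ ≤ C⁻¹ * 1 := by
        gcongr
        exact div_le_one_of_le₀ hlog_le_N (by positivity)
    _ < 1 := by simpa using inv_lt_one_of_one_lt₀ hC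

theorem CondH.cross_terms_le (h : S.CondH C) (hC : 324 ≤ C) :
    S.N * S.P * (2 * S.sigman ^ 2 * √(S.d * S.logCross)) ≤ S.sigman ^ 2 * S.d / 2 := by
  have hlog := h.two_thirds_le_logT
  have hdim : C * S.m ^ 2 * S.P ^ 2 * S.N ^ 2 * S.logT ^ 4 ≤ S.d := by
    obtain ⟨-, -, hdim, -⟩ := h
    exact hdim
  have hlog_le_pow : 8 / 27 * S.logT ≤ S.logT ^ 4 :=
    calc 8 / 27 * S.logT = (2 / 3) ^ 3 * S.logT := by norm_num
      _ ≤ S.logT ^ 3 * S.logT := by gcongr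
      _ = S.logT ^ 4 := by ring
  have hcross : (4 * (S.N * S.P : ℝ)) ^ 2 * S.logCross ≤ S.d :=
    calc (4 * (S.N * S.P : ℝ)) ^ 2 * S.logCross
        ≤ (4 * (S.N * S.P)) ^ 2 * (6 * S.logT) := by
          gcongr
          exact h.logCross_le
      _ = 324 * 1 ^ 2 * S.P ^ 2 * S.N ^ 2 * (8 / 27 * S.logT) := by ring
      _ ≤ C * S.m ^ 2 * S.P ^ 2 * S.N ^ 2 * S.logT ^ 4 := by
          have := S.one_le_m
          gcongr
      _ ≤ S.d := hdim
  have hsqrt := mul_sqrt_mul_le (by positivity) (Nat.cast_nonneg S.d) hcross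
  linarith [mul_le_mul_of_nonneg_left hsqrt (sq_nonneg S.sigman)]

theorem CondH.half_alpha_le (h : S.CondH C) (hC : 2 ≤ C) :
    S.alpha / 2 ≤ S.alpha - S.eps := by
  obtain ⟨-, -, -, -, -, -, -, heps, -⟩ := h
  have := S.halpha
  have hmin : S.eps ≤ 2⁻¹ * S.alpha :=
    calc S.eps ≤ C⁻¹ * min S.alpha (1 / (S.m * S.sigma0 * S.d)) := heps.le
      _ ≤ C⁻¹ * S.alpha := by
          gcongr
          exact min_le_left _ _
      _ ≤ 2⁻¹ * S.alpha := by gcongr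
  linarith

theorem CondH.pow_three_le_alpha_pow_three_mul (h : S.CondH C) (hp : S.pun < 1) :
    (C * S.sigman * √S.d * S.logT) ^ 3 ≤ S.alpha ^ 3 * (S.N * (1 - S.pun)) := by
  have hlog := h.two_thirds_le_logT
  have := S.hsigman
  have hM : 0 < S.N * (1 - S.pun) := mul_pos S.N_pos (sub_pos.mpr hp)
  obtain ⟨hC, -, -, hsignal, -⟩ := h
  have hroot : ((S.N * (1 - S.pun)) ^ ((1 : ℝ) / 3)) ^ 3 = S.N * (1 - S.pun) := by
    simpa using rpow_div_natCast_pow hM.le 1 three_ne_zero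
  rw [div_le_iff₀ (by positivity)] at hsignal
  rw [← hroot, ← mul_pow]
  exact pow_le_pow_left₀ (by positivity) hsignal 3

theorem CondH.signal_dominates (h : S.CondH C) {K : ℝ} (hK : 1 ≤ K) (hC : 40000 * K ≤ C)
    (hp : S.pun < 1) :
    400 * K * √S.logInit * (S.sigman * √S.d) ^ 3 ≤
      S.N * (S.alpha - S.eps) ^ 3 * (1 - S.pun) := by
  have hlog := h.two_thirds_le_logT
  have := S.halpha
  have := S.hsigman
  have hsqrt : √S.logInit ≤ 5 * S.logT := S.sqrt_logInit_le_logInit.trans h.logInit_le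
  have hlog_le_pow : 4 / 9 * S.logT ≤ S.logT ^ 3 :=
    calc 4 / 9 * S.logT = (2 / 3) ^ 2 * S.logT := by norm_num
      _ ≤ S.logT ^ 2 * S.logT := by gcongr
      _ = S.logT ^ 3 := by ring
  have : 0 < C := by linarith
  have hC_cube : 40000 * K ≤ C ^ 3 := hC.trans (le_self_pow₀ (by linarith) three_ne_zero)
  calc 400 * K * √S.logInit * (S.sigman * √S.d) ^ 3
      ≤ 400 * K * (5 * S.logT) * (S.sigman * √S.d) ^ 3 := by gcongr
    _ ≤ 1 / 8 * (40000 * K) * (4 / 9 * S.logT) * (S.sigman * √S.d) ^ 3 := by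
        gcongr ?_ * _
        linarith [mul_nonneg (zero_le_one.trans hK) (by linarith : 0 ≤ S.logT)]
    _ ≤ 1 / 8 * C ^ 3 * S.logT ^ 3 * (S.sigman * √S.d) ^ 3 := by gcongr
    _ = 1 / 8 * (C * S.sigman * √S.d * S.logT) ^ 3 := by ring
    _ ≤ 1 / 8 * (S.alpha ^ 3 * (S.N * (1 - S.pun))) := by
        gcongr
        exact h.pow_three_le_alpha_pow_three_mul hp
    _ = S.N * (S.alpha / 2) ^ 3 * (1 - S.pun) := by ring
    _ ≤ S.N * (S.alpha - S.eps) ^ 3 * (1 - S.pun) := by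
        gcongr
        exact h.half_alpha_le (by linarith)

theorem CondH.sigma0_mul_le (h : S.CondH C) :
    (S.m : ℝ) ^ ((2 : ℝ) / 3) * (S.P : ℝ) ^ ((2 : ℝ) / 3) *
      (S.sigma0 * S.sigman * √S.d * S.logTd) ≤ C⁻¹ := by
  have hlog : 0 < S.logTd := by linarith [h.two_thirds_le_logT, h.logT_le_logTd]
  have := S.one_le_m
  have := S.one_le_P
  have := S.one_le_d
  have := S.hsigman
  obtain ⟨hC, -, -, -, hinit, -⟩ := h
  set q := (S.m : ℝ) ^ ((2 : ℝ) / 3) * (S.P : ℝ) ^ ((2 : ℝ) / 3) * S.sigman * √S.d with hq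
  have hq_pos : 0 < q := by positivity
  have hsigma0 : S.sigma0 ≤ C⁻¹ * (1 / q) / S.logTd := by
    refine hinit.trans ?_
    rw [← logTd]
    gcongr
    exact (min_le_left _ _).trans (min_le_left _ _)
  calc _ = S.sigma0 * (q * S.logTd) := by rw [hq]; ring
    _ ≤ C⁻¹ * (1 / q) / S.logTd * (q * S.logTd) := by gcongr
    _ = C⁻¹ := by field_simp

theorem CondH.eta_mul_alpha_sq_le (h : S.CondH C) : S.eta * S.alpha ^ 2 ≤ 3 / (2 * C) := by
  have hlog := h.two_thirds_le_logT
  have := S.halpha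
  obtain ⟨hC, -, -, -, -, hrate, -⟩ := h
  have heta : S.eta ≤ C⁻¹ * (1 / S.alpha ^ 2) / (2 / 3) := by
    refine hrate.trans ?_
    rw [← logT]
    gcongr
    exact min_le_right _ _
  calc S.eta * S.alpha ^ 2 ≤ C⁻¹ * (1 / S.alpha ^ 2) / (2 / 3) * S.alpha ^ 2 := by gcongr
    _ = 3 / (2 * C) := by field_simp

end parameters

section earlyPhase

/-- The scale at which the noise alignments `⟨w_r, x_{i,j}⟩` of the weights stay during the early
phase: the bound (P6) at initialization with the factor `2` raised to `5/2`. -/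
def noiseLevel : ℝ := 5 / 2 * (S.sigma0 * S.sigman * √S.d * √S.logInit)

/-- The bound on the noise coefficients in the early phase, where `M` bounds the margins of the
learnable samples; the paper takes `M = 2 C₀³`. -/
def rhoBound (M : ℝ) : ℝ :=
  100 * Real.exp M * S.logInit * (S.sigma0 * S.sigman ^ 2 * S.d) /
    (S.N * (S.alpha - S.eps) ^ 3 * (1 - S.pun))

/-- The horizon `T̂₀` of the early phase, where `M` bounds the margins of the learnable samples;
the paper takes `M = 2 C₀³`. -/
def horizon (M : ℝ) : ℝ :=
  5 * Real.exp M / (S.eta * (S.alpha - S.eps) ^ 3 * (1 - S.pun) * S.sigma0)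

/-- The statement `max_{i,j,r} ρ_{i,j,r}^{(t)} ≤ R`, the maximum being over noise patches. -/
def RhoLE (R : ℝ) (t : ℕ) : Prop := ∀ i j r, j ≠ S.sig i → S.rho i j r t ≤ R

/-- The threshold `C₀ / (α m^{1/3})` of the signal coordinates in the definition of `T₀`. -/
def signalThreshold (C0 : ℝ) : ℝ := C0 / (S.alpha * (S.m : ℝ) ^ ((1 : ℝ) / 3))

/-- The coefficient of the quadratic growth of the signal coordinates while the margins of the
learnable samples are at most `M`. -/
def growthRate (M : ℝ) : ℝ :=
  3 / 2 * (S.eta * (S.alpha - S.eps) ^ 3 * (1 - S.pun)) / Real.exp M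

theorem noiseLevel_nonneg : 0 ≤ S.noiseLevel := by
  have := S.hsigma0
  have := S.hsigman
  unfold noiseLevel
  positivity

theorem noiseLevel_sq :
    S.noiseLevel ^ 2 = 25 / 4 * (S.sigma0 ^ 2 * S.sigman ^ 2 * S.d * S.logInit) := by
  have hsd : √(S.d : ℝ) ^ 2 = S.d := Real.sq_sqrt (Nat.cast_nonneg _)
  have hsL : √S.logInit ^ 2 = S.logInit := Real.sq_sqrt (zero_le_one.trans S.one_le_logInit)
  rw [noiseLevel, mul_pow, mul_pow, mul_pow, mul_pow, hsd, hsL]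
  norm_num

variable {S} {C C0 M : ℝ}

theorem horizon_nonneg (hp : S.pun < 1) : 0 ≤ S.horizon M := by
  have := S.heta
  have := S.hsigma0
  have := S.alpha_sub_eps_pos
  unfold horizon
  positivity

theorem rhoBound_nonneg (hp : S.pun < 1) : 0 ≤ S.rhoBound M := by
  have := S.hsigma0
  have := S.alpha_sub_eps_pos
  have := S.one_le_logInit
  unfold rhoBound
  positivity

theorem growthRate_nonneg (hp : S.pun < 1) : 0 ≤ S.growthRate M := by
  have := S.heta
  have := S.alpha_sub_eps_pos
  unfold growthRate
  positivity

theorem horizon_mul_noise_increment_le (hp : S.pun < 1) :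
    S.horizon M * (3 * S.eta / S.N * S.noiseLevel ^ 2) ≤ S.rhoBound M := by
  have := S.heta
  have hratio : S.horizon M * (3 * S.eta / S.N * S.noiseLevel ^ 2) = 15 / 16 * S.rhoBound M := by
    rw [noiseLevel_sq, horizon, rhoBound]
    field_simp
    ring
  linarith [rhoBound_nonneg (M := M) hp]

theorem horizon_mul_growthRate (hp : S.pun < 1) :
    S.horizon M * (S.growthRate M / 2) = 15 / 4 * S.sigma0⁻¹ := by
  have := S.heta
  have := S.alpha_sub_eps_pos
  have : 0 < 1 - S.pun := sub_pos.mpr hp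
  rw [horizon, growthRate]
  field_simp
  norm_num

theorem CondH.rhoBound_mul_le (h : S.CondH C) (hM : 0 ≤ M) (hC : 40000 * Real.exp M ≤ C)
    (hp : S.pun < 1) :
    S.rhoBound M * (2 * S.sigman ^ 2 * S.d) ≤
      1 / 2 * (S.sigma0 * S.sigman * √S.d * √S.logInit) := by
  have hsignal := h.signal_dominates (Real.one_le_exp hM) hC hp
  have hsd : √(S.d : ℝ) ^ 2 = S.d := Real.sq_sqrt (Nat.cast_nonneg _)
  have hsL : √S.logInit ^ 2 = S.logInit := Real.sq_sqrt (zero_le_one.trans S.one_le_logInit)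
  have := S.hsigman
  have := S.hsigma0
  have hden : 0 < S.N * (S.alpha - S.eps) ^ 3 * (1 - S.pun) :=
    mul_pos (mul_pos S.N_pos (pow_pos S.alpha_sub_eps_pos 3)) (sub_pos.mpr hp)
  rw [rhoBound, div_mul_eq_mul_div, div_le_iff₀ hden]
  calc _ = 1 / 2 * (S.sigma0 * S.sigman * √S.d * √S.logInit) *
        (400 * Real.exp M * √S.logInit * (S.sigman * √S.d) ^ 3) := by
        linear_combination (-200 * Real.exp M * S.sigma0 * S.sigman ^ 4) *
          (√(S.d : ℝ) ^ 4 * hsL + S.logInit * (√(S.d : ℝ) ^ 2 + S.d) * hsd)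
    _ ≤ _ := by gcongr

theorem CondH.noise_output_le_one (h : S.CondH C) (hC : 25 / 2 ≤ C) :
    S.m * S.P * S.noiseLevel ^ 3 ≤ 1 := by
  have := S.hsigma0
  have := S.hsigman
  have hnoise := S.noiseLevel_nonneg
  have hm := S.one_le_m
  have hP := S.one_le_P
  have hsqrt : √S.logInit ≤ 5 * S.logTd :=
    S.sqrt_logInit_le_logInit.trans (by linarith [h.logInit_le, h.logT_le_logTd])
  have hcube (z : ℝ) (hz : 1 ≤ z) : z ≤ (z ^ ((2 : ℝ) / 3)) ^ 3 := by
    have hpow : (z ^ ((2 : ℝ) / 3)) ^ 3 = z ^ 2 := by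
      simpa using rpow_div_natCast_pow (zero_le_one.trans hz) 2 three_ne_zero
    exact hpow ▸ le_self_pow₀ hz two_ne_zero
  set a := (S.m : ℝ) ^ ((2 : ℝ) / 3)
  set b := (S.P : ℝ) ^ ((2 : ℝ) / 3)
  have hunit : a * b * S.noiseLevel ≤ 1 :=
    calc a * b * S.noiseLevel
        ≤ a * b * (5 / 2 * (S.sigma0 * S.sigman * √S.d * (5 * S.logTd))) := by
          unfold noiseLevel
          gcongr
      _ = 25 / 2 * (a * b * (S.sigma0 * S.sigman * √S.d * S.logTd)) := by ring
      _ ≤ 25 / 2 * C⁻¹ := by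
          gcongr
          exact h.sigma0_mul_le
      _ ≤ 1 := div_le_one_of_le₀ hC (by linarith)
  calc S.m * S.P * S.noiseLevel ^ 3 ≤ a ^ 3 * b ^ 3 * S.noiseLevel ^ 3 := by
        gcongr
        exacts [hcube _ hm, hcube _ hP]
    _ = (a * b * S.noiseLevel) ^ 3 := by ring
    _ ≤ 1 := pow_le_one₀ (by positivity) hunit

theorem RhoLE.abs_dot_w_noise_le {R : ℝ} {t : ℕ} (hR : S.RhoLE R t) (hD : S.ATDyn)
    {i : Fin S.N} {j : Fin S.P} (hj : j ≠ S.sig i) (r : Fin S.m) :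
    |dot (S.w t r) (S.x i j)| ≤ |dot (S.w 0 r) (S.x i j)| +
      R * ∑ k, ∑ q ∈ Finset.univ.erase (S.sig k), |dot (S.x k q) (S.x i j)| := by
  rw [dot_w_noise hD i hj]
  refine (abs_add_le _ _).trans (add_le_add_right ?_ _)
  simp only [Finset.mul_sum]
  refine (Finset.abs_sum_le_sum_abs _ _).trans <| Finset.sum_le_sum fun k _ =>
    (Finset.abs_sum_le_sum_abs _ _).trans <| Finset.sum_le_sum fun q hq => ?_
  rw [abs_mul, abs_mul, S.abs_y, one_mul, abs_of_nonneg (S.rho_nonneg k q r t)]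
  exact mul_le_mul_of_nonneg_right (hR k q r (Finset.ne_of_mem_erase hq)) (abs_nonneg _)

theorem CondH.abs_dot_w_noise_le (h : S.CondH C) (hD : S.ATDyn) (hE : S.EventE) (hM : 0 ≤ M)
    (hC : 40000 * Real.exp M ≤ C) (hp : S.pun < 1) {t : ℕ} (hR : S.RhoLE (S.rhoBound M) t)
    {i : Fin S.N} {j : Fin S.P} (hj : j ≠ S.sig i) (r : Fin S.m) :
    |dot (S.w t r) (S.x i j)| ≤ S.noiseLevel := by
  have hinit : |dot (S.w 0 r) (S.x i j)| ≤ 2 * S.sigma0 * S.sigman * √(S.d * S.logInit) := by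
    obtain ⟨-, -, -, -, -, hinit, -⟩ := hE
    exact hinit r i j hj
  have hcross : ∑ k, ∑ q ∈ Finset.univ.erase (S.sig k), |dot (S.x k q) (S.x i j)| ≤
      2 * S.sigman ^ 2 * S.d := by
    linarith [sum_abs_dot_noise_le hE hj, h.cross_terms_le (by linarith [Real.one_le_exp hM])]
  rw [Real.sqrt_mul (Nat.cast_nonneg _)] at hinit
  have hlearned := (mul_le_mul_of_nonneg_left hcross (rhoBound_nonneg hp)).trans
    (h.rhoBound_mul_le hM hC hp)
  rw [noiseLevel]
  linarith [hR.abs_dot_w_noise_le hD hj r]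

theorem RhoLE.succ {R B : ℝ} {t : ℕ} (hR : S.RhoLE R t)
    (hB : ∀ i j r, j ≠ S.sig i → |dot (S.w t r) (S.x i j)| ≤ B) :
    S.RhoLE (R + 3 * S.eta / S.N * B ^ 2) (t + 1) := by
  intro i j r hj
  have := S.heta
  rw [rho]
  refine add_le_add (hR i j r hj) ?_
  calc 3 * S.eta / S.N * psi (S.marg t i) * dot (S.w t r) (S.x i j) ^ 2
      ≤ 3 * S.eta / S.N * 1 * B ^ 2 := by
        have := psi_le_one (S.marg t i)
        have : dot (S.w t r) (S.x i j) ^ 2 ≤ B ^ 2 := 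
          (sq_abs _).symm.trans_le (pow_le_pow_left₀ (abs_nonneg _) (hB i j r hj) 2)
        gcongr
    _ = 3 * S.eta / S.N * B ^ 2 := by rw [mul_one]

/- A bootstrap: as long as the coefficients obey the bound, the noise alignments stay below
`noiseLevel`, so the coefficients grow at most linearly and still obey it at the next step. -/
theorem CondH.rhoLE_rhoBound (h : S.CondH C) (hD : S.ATDyn) (hE : S.EventE) (hM : 0 ≤ M)
    (hC : 40000 * Real.exp M ≤ C) (hp : S.pun < 1) {t : ℕ} (ht : (t : ℝ) ≤ S.horizon M) :
    S.RhoLE (S.rhoBound M) t := by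
  set c := 3 * S.eta / S.N * S.noiseLevel ^ 2
  have hc : 0 ≤ c := by
    have := S.heta
    positivity
  have hlinear_le {t : ℕ} (ht : (t : ℝ) ≤ S.horizon M) : t * c ≤ S.rhoBound M :=
    (mul_le_mul_of_nonneg_right ht hc).trans (horizon_mul_noise_increment_le hp)
  suffices hlinear : S.RhoLE (t * c) t from
    fun i j r hj => (hlinear i j r hj).trans (hlinear_le ht)
  induction t with
  | zero => exact fun _ _ _ _ => by simp [rho]
  | succ t ih =>
    push_cast at ht ⊢
    have ht' : (t : ℝ) ≤ S.horizon M := by linarith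
    have hbound : S.RhoLE (S.rhoBound M) t :=
      fun i j r hj => (ih ht' i j r hj).trans (hlinear_le ht')
    rw [add_one_mul]
    exact (ih ht').succ fun i j r hj => h.abs_dot_w_noise_le hD hE hM hC hp hbound hj r

theorem m_mul_signalThreshold_pow_three (C0 : ℝ) :
    S.m * (S.alpha * S.signalThreshold C0) ^ 3 = C0 ^ 3 := by
  have := S.one_le_m
  have := S.halpha
  have hroot : ((S.m : ℝ) ^ ((1 : ℝ) / 3)) ^ 3 = S.m := by
    simpa using rpow_div_natCast_pow (Nat.cast_nonneg S.m) 1 three_ne_zero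
  have hscale : S.alpha * S.signalThreshold C0 = C0 / (S.m : ℝ) ^ ((1 : ℝ) / 3) := by
    rw [signalThreshold]
    field_simp
  rw [hscale, div_pow, hroot]
  field_simp

theorem CondH.marg_le_two_mul_pow_three (h : S.CondH C) (hC : 25 / 2 ≤ C) (hC0 : 1 ≤ C0) {t : ℕ}
    (hsignal : ∀ r, S.wsig t r ≤ S.signalThreshold C0)
    (hnoise : ∀ i j r, j ≠ S.sig i → |dot (S.w t r) (S.x i j)| ≤ S.noiseLevel)
    {i : Fin S.N} (hi : i ∈ S.SL) : S.marg t i ≤ 2 * C0 ^ 3 := by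
  have := S.halpha
  have hthreshold : 0 ≤ S.alpha * S.signalThreshold C0 := by
    unfold signalThreshold
    positivity
  have hmarg := marg_le hi hthreshold S.noiseLevel_nonneg
    (fun r => mul_le_mul_of_nonneg_left (hsignal r) S.halpha.le) fun r j hj => hnoise i j r hj
  rw [m_mul_signalThreshold_pow_three] at hmarg
  linarith [h.noise_output_le_one hC, one_le_pow₀ (n := 3) hC0]

theorem wsig_add_growthRate_mul_sq_le (hD : S.ATDyn) (hM : 0 ≤ M) {t : ℕ}
    (hmarg : ∀ i ∈ S.SL, S.marg t i ≤ M) (r : Fin S.m) :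
    S.wsig t r + S.growthRate M * S.wsig t r ^ 2 ≤ S.wsig (t + 1) r := by
  have := S.heta
  have hαε := S.alpha_sub_eps_pos
  have hrate : S.growthRate M * S.wsig t r ^ 2 = 3 * S.eta / S.N *
      ∑ _i ∈ S.SL, 1 / (2 * Real.exp M) * (S.alpha - S.eps) ^ 3 * S.wsig t r ^ 2 := by
    rw [Finset.sum_const, nsmul_eq_mul, growthRate, ← S.card_SL_div_N]
    field_simp
  rw [wsig_succ hD, hrate]
  gcongr with i hi
  · exact (psi_pos _).le
  · exact inv_two_mul_exp_le_psi hM (hmarg i hi)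
  · exact (S.hadvlearn t i hi).1

theorem CondH.growthRate_mul_signalThreshold_le_one (h : S.CondH C) (hC : 9 / 4 ≤ C)
    (hC0 : 0 ≤ C0) (hM : C0 ≤ Real.exp M) (hp : S.pun < 1) :
    S.growthRate M * S.signalThreshold C0 ≤ 1 := by
  have := S.heta
  have hα := S.halpha
  have hαε := S.alpha_sub_eps_pos
  have hm : 1 ≤ (S.m : ℝ) ^ ((1 : ℝ) / 3) := Real.one_le_rpow S.one_le_m (by norm_num)
  calc S.growthRate M * S.signalThreshold C0
      ≤ 3 / 2 * (S.eta * S.alpha ^ 3 * 1) / Real.exp M * (Real.exp M / (S.alpha * 1)) := by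
        unfold growthRate signalThreshold
        gcongr <;> linarith [S.heps, S.pun_nonneg]
    _ = 3 / 2 * (S.eta * S.alpha ^ 2) := by field_simp
    _ ≤ 3 / 2 * (3 / (2 * C)) := by
        gcongr
        exact h.eta_mul_alpha_sq_le
    _ = (9 / 4) / C := by field_simp; norm_num
    _ ≤ 1 := div_le_one_of_le₀ hC (by linarith)

/- While no signal coordinate has crossed the threshold, the margins stay below `2 C₀³`, so the
best initialized signal coordinate would grow quadratically up to `T̂₀`, which is too long for a
sequence started at `σ₀ / 2`. -/
theorem CondH.exists_signalThreshold_lt_wsig (h : S.CondH C) (hD : S.ATDyn) (hE : S.EventE)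
    (hC0 : 1 ≤ C0) (hC : 40000 * Real.exp (2 * C0 ^ 3) ≤ C) (hp : S.pun < 1) :
    ∃ t : ℕ, (t : ℝ) ≤ S.horizon (2 * C0 ^ 3) ∧ ∃ r, S.signalThreshold C0 < S.wsig t r := by
  by_contra! hbelow
  set M := 2 * C0 ^ 3
  have hM : 0 ≤ M := by positivity
  have hC' : 40000 ≤ C := by linarith [Real.one_le_exp hM]
  have hC0_exp : C0 ≤ Real.exp M := by
    linarith [Real.add_one_le_exp M, le_self_pow₀ hC0 three_ne_zero]
  have hκ : 0 ≤ S.growthRate M := growthRate_nonneg hp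
  have hstep (t : ℕ) (ht : (t : ℝ) ≤ S.horizon M) (r : Fin S.m) :
      S.wsig t r + S.growthRate M * S.wsig t r ^ 2 ≤ S.wsig (t + 1) r :=
    wsig_add_growthRate_mul_sq_le hD hM (fun _ hi =>
      h.marg_le_two_mul_pow_three (by linarith) hC0 (hbelow t ht)
        (fun _ _ r hj => h.abs_dot_w_noise_le hD hE hM hC hp
          (h.rhoLE_rhoBound hD hE hM hC hp ht) hj r) hi) r
  obtain ⟨r, hr⟩ : ∃ r, S.sigma0 / 2 ≤ S.wsig 0 r := by
    obtain ⟨-, -, -, -, -, -, hsignal, -⟩ := hE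
    simpa only [wsig_eq_dot] using hsignal
  have hhorizon {t : ℕ} (ht : t < ⌊S.horizon M⌋₊ + 1) : (t : ℝ) ≤ S.horizon M :=
    (Nat.le_floor_iff (horizon_nonneg hp)).mp (Nat.lt_succ_iff.mp ht)
  have hgrowth := natCast_mul_lt_inv_of_quadratic_growth (w := fun t => S.wsig t r) hκ
    ((half_pos S.hsigma0).trans_le hr)
    (fun t ht => (mul_le_mul_of_nonneg_left (hbelow t (hhorizon ht) r) hκ).trans
      (h.growthRate_mul_signalThreshold_le_one (by linarith) (by linarith) hC0_exp hp))
    fun t ht => hstep t (hhorizon ht) r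
  have : 15 / 4 * S.sigma0⁻¹ < 2 * S.sigma0⁻¹ :=
    calc 15 / 4 * S.sigma0⁻¹ = S.horizon M * (S.growthRate M / 2) :=
          (horizon_mul_growthRate hp).symm
      _ ≤ (⌊S.horizon M⌋₊ + 1 : ℕ) * (S.growthRate M / 2) := by
          gcongr
          exact_mod_cast (Nat.lt_floor_add_one (S.horizon M)).le
      _ < (S.wsig 0 r)⁻¹ := hgrowth
      _ ≤ (S.sigma0 / 2)⁻¹ := inv_anti₀ (half_pos S.hsigma0) hr
      _ = 2 * S.sigma0⁻¹ := by rw [inv_div, div_eq_mul_inv]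
  linarith [inv_pos.mpr S.hsigma0]

theorem CondH.T0_le_horizon (h : S.CondH C) (hD : S.ATDyn) (hE : S.EventE) (hC0 : 1 ≤ C0)
    (hC : 40000 * Real.exp (2 * C0 ^ 3) ≤ C) (hp : S.pun < 1) :
    (S.T0 C0 : ℝ) ≤ S.horizon (2 * C0 ^ 3) := by
  obtain ⟨t, ht, hhit⟩ := h.exists_signalThreshold_lt_wsig hD hE hC0 hC hp
  have hT0 : S.T0 C0 ≤ t := Nat.sInf_le hhit
  exact (Nat.cast_le.mpr hT0).trans ht

end earlyPhase

end Setting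

theorem stmt5_general {C0 C : ℝ} (hC0 : 1 ≤ C0) (hC : 40000 * Real.exp (2 * C0 ^ 3) ≤ C)
    {S : Setting} (hD : S.ATDyn) (hE : S.EventE) (h : S.CondH C) (hp : S.pun < 1) :
    (∀ t : ℕ, (t : ℝ) ≤ S.horizon (2 * C0 ^ 3) → S.RhoLE (S.rhoBound (2 * C0 ^ 3)) t) ∧
      ∀ t : ℕ, t ≤ S.T0 C0 → S.RhoLE (S.rhoBound (2 * C0 ^ 3)) t := by
  have hbound {t : ℕ} (ht : (t : ℝ) ≤ S.horizon (2 * C0 ^ 3)) :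
      S.RhoLE (S.rhoBound (2 * C0 ^ 3)) t :=
    h.rhoLE_rhoBound hD hE (by positivity) hC hp ht
  exact ⟨fun t ht => hbound ht, fun t ht =>
    hbound ((Nat.cast_le.mpr ht).trans (h.T0_le_horizon hD hE hC0 hC hp))⟩

/-- Early-phase noise coefficient bound. On the event `E`, under
Condition (H), for all iterations `t ≤ T̂₀ = 5 exp(2C₀³)/(η(α−ε)³(1−p_un)σ₀)` the noise
coefficients are bounded as stated; in particular the same bound holds for `t ≤ T₀`. -/
theorem stmt5 :
    ∃ C0 C : ℝ, 0 < C0 ∧ 0 < C ∧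
      ∀ S : Setting, S.ATDyn → S.EventE → S.CondH C → (S.SU.Nonempty → S.SparseRegime C) →
        (∀ t : ℕ, (t : ℝ) ≤ 5 * Real.exp (2 * C0 ^ 3) /
              (S.eta * (S.alpha - S.eps) ^ 3 * (1 - S.pun) * S.sigma0) →
          ∀ i j r, j ≠ S.sig i →
            S.rho i j r t ≤
              100 * Real.exp (2 * C0 ^ 3) * Real.log ((16 : ℝ) * S.N * S.m * S.P / S.delta) *
                (S.sigma0 * S.sigman ^ 2 * S.d) /
                ((S.N : ℝ) * (S.alpha - S.eps) ^ 3 * (1 - S.pun))) ∧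
        (∀ t : ℕ, t ≤ S.T0 C0 →
          ∀ i j r, j ≠ S.sig i →
            S.rho i j r t ≤
              100 * Real.exp (2 * C0 ^ 3) * Real.log ((16 : ℝ) * S.N * S.m * S.P / S.delta) *
                (S.sigma0 * S.sigman ^ 2 * S.d) /
                ((S.N : ℝ) * (S.alpha - S.eps) ^ 3 * (1 - S.pun))) := by
  have hC : 1 < 40000 * Real.exp (2 * 1 ^ 3) := by linarith [Real.add_one_le_exp (2 * (1 : ℝ) ^ 3)]
  exact ⟨1, _, one_pos, one_pos.trans hC, fun S hD hE h hs =>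
    stmt5_general le_rfl le_rfl hD hE h (h.pun_lt_one hC hs)⟩

end AD

end
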